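/- Every planar simple graph G on n vertices contains a subset V' of its vertex set with 2·|V'| ≥ n such that the induced subgraph G[V'] is outerplanar, i.e., G[V'] admits an outerplane planar drawing. -/

import Mathlib

open Set Bornology

/-- Points of the Euclidean plane. -/
abbrev Pt : Type := ℝ × ℝ

/-- `A` is an arc connecting `p` and `q`: the image of a continuous injective map
from `[0,1]` to the plane sending `0` to `p` and `1` to `q`. -/
def IsArcBetween (A : Set Pt) (p q : Pt) : Prop :=
  ∃ f : ℝ → Pt, ContinuousOn f (Set.Icc 0 1) ∧ Set.InjOn f (Set.Icc 0 1) ∧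
    f 0 = p ∧ f 1 = q ∧ A = f '' Set.Icc 0 1

/-- A planar drawing of a finite simple graph `G`: an injective placement of the
vertices in the plane, together with an arc for each edge joining the images of its
endpoints, such that no arc passes through the image of a vertex other than its two
endpoints, and two distinct arcs intersect only at images of shared endpoints. -/
structure PlanarDrawing {V : Type} [Fintype V] (G : SimpleGraph V) where
  ρ : V → Pt
  inj : Function.Injective ρ
  arc : Sym2 V → Set Pt
  arc_isArc : ∀ u v : V, G.Adj u v → IsArcBetween (arc s(u, v)) (ρ u) (ρ v)
  vertex_mem : ∀ e ∈ G.edgeSet, ∀ w : V, ρ w ∈ arc e → w ∈ e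
  arcs_cross : ∀ e ∈ G.edgeSet, ∀ e' ∈ G.edgeSet, e ≠ e' →
    ∀ x ∈ arc e ∩ arc e', ∃ w : V, w ∈ e ∧ w ∈ e' ∧ x = ρ w

/-- `pts` lies in the closure of every unbounded connected component of the
complement of the drawing set `D` (for a compact drawing set there is exactly one
such component, the outer face). -/
def IsOuterplanePair (D : Set Pt) (pts : Set Pt) : Prop :=
  ∀ U : Set Pt, (∃ x ∉ D, U = connectedComponentIn Dᶜ x) →
    ¬ Bornology.IsBounded U → pts ⊆ closure U

/-- The edges of `G` having both endpoints in `V'`. -/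
def restrictedEdges {V : Type} (G : SimpleGraph V) (V' : Set V) : Set (Sym2 V) :=
  {e | e ∈ G.edgeSet ∧ ∀ v ∈ e, v ∈ V'}

/-- The union of the vertex points of `V'` and the arcs of the edges in `E`,
in the drawing `Γ`. -/
def drawingUnion {V : Type} [Fintype V] {G : SimpleGraph V}
    (Γ : PlanarDrawing G) (V' : Set V) (E : Set (Sym2 V)) : Set Pt :=
  (Γ.ρ '' V') ∪ ⋃ e ∈ E, Γ.arc e

/-- A planar drawing is outerplane if every vertex point lies in the closure of the
(unique) unbounded connected component of the complement of the drawing set. -/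
def IsOuterplaneDrawing {V : Type} [Fintype V] {G : SimpleGraph V}
    (Γ : PlanarDrawing G) : Prop :=
  IsOuterplanePair (Set.range Γ.ρ ∪ ⋃ e ∈ G.edgeSet, Γ.arc e) (Set.range Γ.ρ)

/-!
Split the vertices of each connected component by the parity of their distance to a root; one of the
two classes contains at least half of the vertices. An edge joins vertices whose distances to the
root differ by at most one, so a component of the graph induced by either class lies in a single
sphere around a root, and it suffices to show that spheres induce outerplanar graphs. Each vertex of
the sphere of radius `d + 1` is adjacent to the connected ball inside it. Erase everything but the
sphere from the drawing: the ball now lies in a single face, and that face has the whole sphere on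
its boundary. The inversion `z ↦ (z - r)⁻¹` at a point `r` of the face makes it the outer one.
-/

section Topology

open Filter Topology Metric

section NormedSpace

variable {E : Type*} [NormedAddCommGroup E] [NormedSpace ℝ E]

theorem isPreconnected_setOf_norm_mem (hE : 1 < Module.rank ℝ E) {I : Set ℝ}
    (hI : IsPreconnected I) (hpos : I ⊆ Ioi 0) : IsPreconnected {x : E | ‖x‖ ∈ I} := by
  have himage : {x : E | ‖x‖ ∈ I} = (fun a : ℝ × E ↦ a.1 • a.2) '' I ×ˢ sphere 0 1 := by
    ext x
    constructor
    · intro hx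
      have hx0 : ‖x‖ ≠ 0 := (hpos hx).ne'
      exact ⟨(‖x‖, ‖x‖⁻¹ • x), ⟨hx, by simp [norm_smul, hx0]⟩, by simp [smul_smul, hx0]⟩
    · rintro ⟨⟨t, y⟩, ⟨ht, hy⟩, rfl⟩
      have ht0 : 0 < t := hpos ht
      simpa [norm_smul, abs_of_pos ht0, mem_sphere_zero_iff_norm.1 hy] using ht
  rw [himage]
  exact (hI.prod (isPreconnected_sphere hE 0 1)).image _ (by fun_prop)

theorem isPreconnected_compl_ball_zero (hE : 1 < Module.rank ℝ E) {R : ℝ} (hR : 0 < R) :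
    IsPreconnected (ball (0 : E) R)ᶜ := by
  convert isPreconnected_setOf_norm_mem hE isPreconnected_Ici (Ici_subset_Ioi.2 hR) using 1
  ext x
  simp

theorem isPreconnected_ball_diff_center (hE : 1 < Module.rank ℝ E) (x : E) (ε : ℝ) :
    IsPreconnected (ball x ε \ {x}) := by
  have himage : ball x ε \ {x} = (x + ·) '' {y : E | ‖y‖ ∈ Ioo 0 ε} := by
    ext y
    simp [image_add_left, dist_eq_norm, ← sub_eq_neg_add, sub_eq_zero, and_comm]
  rw [himage]
  exact (isPreconnected_setOf_norm_mem hE isPreconnected_Ioo Ioo_subset_Ioi_self).image _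
    (by fun_prop)

theorem isPreconnected_diff_singleton (hE : 1 < Module.rank ℝ E) {U : Set E} (hU : IsOpen U)
    (hconn : IsPreconnected U) (x : E) : IsPreconnected (U \ {x}) := by
  by_cases hx : x ∈ U
  swap
  · rwa [sdiff_singleton_eq_self hx]
  obtain ⟨ε, hε, hball⟩ := Metric.isOpen_iff.1 hU x hx
  -- A separation of `U \ {x}` extends to `U`: the side containing a punctured ball absorbs `x`.
  have extend : ∀ u v : Set E, IsOpen u → IsOpen v → U \ {x} ⊆ u ∪ v →
      U \ {x} ∩ (u ∩ v) = ∅ → ball x ε \ {x} ⊆ u → U \ {x} ⊆ u := by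
    intro u v hu hv hcover hdisj hsub
    have hUu : U ⊆ u ∪ ball x ε := by
      refine (isPreconnected_iff_subset_of_disjoint.1 hconn _ (v \ {x}) (hu.union isOpen_ball)
        (hv.sdiff isClosed_singleton) ?_ ?_).resolve_right fun h ↦ (h hx).2 rfl
      · intro y hy
        by_cases hyx : y = x
        · exact Or.inl (Or.inr (hyx ▸ mem_ball_self hε))
        · exact (hcover ⟨hy, hyx⟩).imp Or.inl (⟨·, hyx⟩)
      · refine eq_empty_of_forall_notMem fun y ⟨hy, hyu, hyv, hyx⟩ ↦ ?_
        exact hdisj.subset ⟨⟨hy, hyx⟩, hyu.elim id fun hyb ↦ hsub ⟨hyb, hyx⟩, hyv⟩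
    exact fun y hy ↦ (hUu hy.1).elim id fun hyb ↦ hsub ⟨hyb, hy.2⟩
  rw [isPreconnected_iff_subset_of_disjoint]
  intro u v hu hv hcover hdisj
  have hsub : ball x ε \ {x} ⊆ U \ {x} := sdiff_subset_sdiff_left hball
  rcases isPreconnected_iff_subset_of_disjoint.1 (isPreconnected_ball_diff_center hE x ε) u v hu hv
    (hsub.trans hcover) (subset_empty_iff.1 (hdisj ▸ inter_subset_inter_left _ hsub)) with h | h
  · exact Or.inl (extend u v hu hv hcover hdisj h)
  · exact Or.inr (extend v u hv hu (union_comm u v ▸ hcover) (inter_comm u v ▸ hdisj) h)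

end NormedSpace

theorem connectedComponentIn_eq_of_mem_closure {X : Type*} [TopologicalSpace X]
    [LocallyConnectedSpace X] {U : Set X} {x y : X} (hU : IsOpen U) (hy : y ∈ U)
    (hyx : y ∈ closure (connectedComponentIn U x)) :
    connectedComponentIn U x = connectedComponentIn U y := by
  obtain ⟨z, hzy, hzx⟩ := mem_closure_iff.1 hyx _ hU.connectedComponentIn
    (mem_connectedComponentIn hy)
  rw [connectedComponentIn_eq hzx, connectedComponentIn_eq hzy]

theorem one_lt_rank_plane : 1 < Module.rank ℝ Pt :=
  Module.one_lt_rank_of_one_lt_finrank (by simp)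

/-- The point `p` is a limit of points of `Dᶜ` that can be joined to infinity inside `Dᶜ`. For
bounded `D` this means that `p` lies in the closure of the outer face, but, unlike that notion, it
can be verified by exhibiting a single connected set. -/
def AccessibleFromInfinity (D : Set Pt) (p : Pt) : Prop :=
  ∃ S ⊆ Dᶜ, IsPreconnected S ∧ ¬ IsBounded S ∧ p ∈ closure S

theorem AccessibleFromInfinity.anti {D D' : Set Pt} {p : Pt} (hDD' : D' ⊆ D)
    (hp : AccessibleFromInfinity D p) : AccessibleFromInfinity D' p :=
  let ⟨S, hSD, hS⟩ := hp
  ⟨S, hSD.trans (compl_subset_compl.2 hDD'), hS⟩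

theorem not_isBounded_compl_ball_zero (R : ℝ) : ¬ IsBounded (ball (0 : Pt) R)ᶜ := fun h ↦
  NormedSpace.unbounded_univ ℝ Pt (union_compl_self (ball (0 : Pt) R) ▸ isBounded_ball.union h)

theorem isPreconnected_union_compl_ball_zero {S : Set Pt} {R : ℝ} (hR : 0 < R)
    (hS : IsPreconnected S) (hunb : ¬ IsBounded S) : IsPreconnected (S ∪ (ball (0 : Pt) R)ᶜ) := by
  obtain ⟨x, hxS, hx⟩ := not_subset.1 fun h : S ⊆ ball 0 R ↦ hunb (isBounded_ball.subset h)
  exact hS.union x hxS hx (isPreconnected_compl_ball_zero one_lt_rank_plane hR)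

theorem isOuterplanePair_iff_accessibleFromInfinity {D P : Set Pt} (hD : IsBounded D) :
    IsOuterplanePair D P ↔ ∀ p ∈ P, AccessibleFromInfinity D p := by
  obtain ⟨R, hR, hDR⟩ := hD.subset_ball_lt 0 0
  have hext : (ball (0 : Pt) R)ᶜ ⊆ Dᶜ := compl_subset_compl.2 hDR
  constructor
  · intro h p hp
    obtain ⟨x, hx⟩ : (ball (0 : Pt) R)ᶜ.Nonempty :=
      nonempty_iff_ne_empty.2 fun h ↦ not_isBounded_compl_ball_zero R (h ▸ isBounded_empty)
    have hsub : (ball (0 : Pt) R)ᶜ ⊆ connectedComponentIn Dᶜ x :=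
      (isPreconnected_compl_ball_zero one_lt_rank_plane hR).subset_connectedComponentIn hx hext
    have hunb : ¬ IsBounded (connectedComponentIn Dᶜ x) :=
      fun h ↦ not_isBounded_compl_ball_zero R (h.subset hsub)
    exact ⟨_, connectedComponentIn_subset _ _, isPreconnected_connectedComponentIn, hunb,
      h _ ⟨x, hext hx, rfl⟩ hunb hp⟩
  · rintro h U ⟨x, -, rfl⟩ hU p hp
    obtain ⟨S, hSD, hS, hunb, hpS⟩ := h p hp
    obtain ⟨y, hyU, hy⟩ := not_subset.1
      fun h : connectedComponentIn Dᶜ x ⊆ ball 0 R ↦ hU (isBounded_ball.subset h)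
    have hSU : S ∪ (ball (0 : Pt) R)ᶜ ⊆ connectedComponentIn Dᶜ x := by
      rw [connectedComponentIn_eq hyU]
      exact (isPreconnected_union_compl_ball_zero hR hS hunb).subset_connectedComponentIn
        (Or.inr hy) (union_subset hSD hext)
    exact closure_mono (subset_union_left.trans hSU) hpS

theorem accessibleFromInfinity_of_finite {D : Set Pt} (hD : D.Finite) (p : Pt) :
    AccessibleFromInfinity D p :=
  ⟨Dᶜ, subset_rfl, (hD.countable.isConnected_compl_of_one_lt_rank one_lt_rank_plane).isPreconnected,
    fun h ↦ NormedSpace.unbounded_univ ℝ Pt (union_compl_self D ▸ hD.isBounded.union h),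
    (hD.countable.dense_compl ℝ).closure_eq ▸ mem_univ p⟩

/-- The map `z ↦ (z - r)⁻¹` of the complex plane, which swaps `r` and infinity. Its value at `r`
itself is the junk value `0`. -/
noncomputable def invAt (r p : Pt) : Pt :=
  Complex.equivRealProdCLM (Complex.equivRealProdCLM.symm (p - r))⁻¹

theorem invAt_injective (r : Pt) : Function.Injective (invAt r) :=
  Complex.equivRealProdCLM.injective.comp <| inv_injective.comp <|
    Complex.equivRealProdCLM.symm.injective.comp sub_left_injective

theorem continuousOn_invAt (r : Pt) : ContinuousOn (invAt r) {r}ᶜ := by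
  refine Complex.equivRealProdCLM.continuous.comp_continuousOn (ContinuousOn.inv₀ ?_ ?_)
  · fun_prop
  · intro p hp
    simpa [sub_eq_zero] using hp

theorem tendsto_invAt_cobounded (r : Pt) : Tendsto (invAt r) (𝓝[≠] r) (cobounded Pt) := by
  have hsub : Tendsto (fun p ↦ Complex.equivRealProdCLM.symm (p - r)) (𝓝[≠] r) (𝓝[≠] 0) := by
    refine tendsto_nhdsWithin_iff.2 ⟨?_, ?_⟩
    · exact ((by fun_prop : Continuous fun p ↦ Complex.equivRealProdCLM.symm (p - r)).tendsto' r 0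
        (by simp)).mono_left nhdsWithin_le_nhds
    · filter_upwards [self_mem_nhdsWithin] with p hp
      simpa [sub_eq_zero] using hp
  exact Complex.equivRealProdCLM.antilipschitz.tendsto_cobounded.comp
    (tendsto_inv₀_nhdsNE_zero.comp hsub)

theorem not_isBounded_image_invAt {r : Pt} {U : Set Pt} (hU : U ∈ 𝓝 r) :
    ¬ IsBounded (invAt r '' (U \ {r})) := by
  intro hb
  have hleave : ∀ᶠ p in 𝓝[≠] r, invAt r p ∉ invAt r '' (U \ {r}) :=
    (tendsto_invAt_cobounded r).eventually (IsBounded.compl hb)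
  obtain ⟨p, hp, hpU⟩ := (hleave.and (inter_mem_nhdsWithin _ hU)).exists
  exact hp (mem_image_of_mem _ ⟨hpU.2, hpU.1⟩)

/-- Inversion at `r` turns the face containing `r` into the outer face. -/
theorem accessibleFromInfinity_image_invAt {D : Set Pt} {p r : Pt} (hD : IsClosed D) (hr : r ∉ D)
    (hpr : p ≠ r) (hp : p ∈ closure (connectedComponentIn Dᶜ r)) :
    AccessibleFromInfinity (invAt r '' D) (invAt r p) := by
  set U := connectedComponentIn Dᶜ r
  have hU : IsOpen U := hD.isOpen_compl.connectedComponentIn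
  have hpU : p ∈ closure (U \ {r}) := 
    closure_minimal ((dense_compl_singleton r).open_subset_closure_inter hU) isClosed_closure hp
  refine ⟨invAt r '' (U \ {r}), ?_, ?_, not_isBounded_image_invAt
    (hU.mem_nhds (mem_connectedComponentIn hr)), ?_⟩
  · rintro _ ⟨q, hq, rfl⟩
    rw [mem_compl_iff, (invAt_injective r).mem_set_image]
    exact connectedComponentIn_subset _ _ hq.1
  · exact (isPreconnected_diff_singleton one_lt_rank_plane hU isPreconnected_connectedComponentIn
      r).image _ ((continuousOn_invAt r).mono fun _ h ↦ h.2)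
  · exact ((continuousOn_invAt r).continuousAt
      (isOpen_compl_singleton.mem_nhds hpr)).continuousWithinAt.mem_closure_image hpU

/-- The retraction of the plane onto the vertical strip `|x| ≤ R`. -/
def clampFst (R : ℝ) (p : Pt) : Pt := (max (-R) (min R p.1), p.2)

theorem clampFst_eq_self {R : ℝ} {p : Pt} (hp : |p.1| ≤ R) : clampFst R p = p := by
  rw [abs_le] at hp
  simp [clampFst, hp.1, hp.2]

theorem abs_fst_clampFst_le {R : ℝ} (hR : 0 ≤ R) (p : Pt) : |(clampFst R p).1| ≤ R :=
  abs_le.2 ⟨le_max_left _ _, max_le (by linarith) (min_le_left _ _)⟩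

theorem clampFst_eq_self_of_abs_fst_lt {R : ℝ} {p : Pt} (hp : |(clampFst R p).1| < R) :
    clampFst R p = p := by
  rw [abs_lt] at hp
  grind [clampFst]

theorem abs_fst_lt_of_mem_ball {R : ℝ} {p : Pt} (hp : p ∈ ball 0 R) : |p.1| < R :=
  (norm_fst_le p).trans_lt (mem_ball_zero_iff.1 hp)

/-- The horizontal retraction onto the strip is applied to the union of the given connected set and
the exterior of `ball 0 R`, whose image contains a vertical ray and is therefore unbounded. -/
theorem AccessibleFromInfinity.exists_subset_strip {D : Set Pt} {p : Pt} {R : ℝ} (hR : 0 < R)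
    (hDR : D ⊆ ball 0 R) (hpD : p ∈ D) (hp : AccessibleFromInfinity D p) :
    ∃ S ⊆ Dᶜ, IsPreconnected S ∧ ¬ IsBounded S ∧ p ∈ closure S ∧ ∀ q ∈ S, |q.1| ≤ R := by
  obtain ⟨S, hSD, hS, hunb, hpS⟩ := hp
  have hcont : Continuous (clampFst R) := by unfold clampFst; fun_prop
  refine ⟨clampFst R '' (S ∪ (ball 0 R)ᶜ), ?_,
    (isPreconnected_union_compl_ball_zero hR hS hunb).image _ hcont.continuousOn, ?_, ?_, ?_⟩
  · rintro _ ⟨q, hq, rfl⟩ hqD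
    rw [clampFst_eq_self_of_abs_fst_lt (abs_fst_lt_of_mem_ball (hDR hqD))] at hqD
    exact hq.elim (hSD · hqD) (· (hDR hqD))
  · intro hb
    have hray : Ici R ⊆ Prod.snd '' (clampFst R '' (S ∪ (ball 0 R)ᶜ)) := by
      intro y hy
      refine ⟨_, mem_image_of_mem _ (Or.inr fun h ↦ ?_), (rfl : (clampFst R (0, y)).2 = y)⟩
      exact (abs_lt.1 ((norm_snd_le (0, y)).trans_lt (mem_ball_zero_iff.1 h))).2.not_ge hy
    exact not_bddAbove_Ici R ((LipschitzWith.prod_snd.isBounded_image hb).bddAbove.mono hray)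
  · rw [← clampFst_eq_self (abs_fst_lt_of_mem_ball (hDR hpD)).le]
    exact image_closure_subset_closure_image hcont
      (mem_image_of_mem _ (closure_mono subset_union_left hpS))
  · rintro _ ⟨q, -, rfl⟩
    exact abs_fst_clampFst_le hR.le q

theorem eq_of_two_mul_add_eq {R a b : ℝ} {m n : ℕ} (ha : |a| ≤ R) (hb : |b| < R)
    (h : 2 * R * m + a = 2 * R * n + b) : m = n := by
  have hR : 0 < 2 * R := by linarith [abs_nonneg b]
  have hlt : |2 * R * ((m : ℝ) - n)| < 2 * R * 1 :=
    calc |2 * R * ((m : ℝ) - n)| = |b - a| := by congr 1; linarith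
      _ ≤ |b| + |a| := abs_sub _ _
      _ < 2 * R * 1 := by linarith
  rw [abs_mul, abs_of_pos hR, mul_lt_mul_iff_right₀ hR] at hlt
  have : |(m : ℤ) - n| < 1 := by exact_mod_cast hlt
  rw [Int.abs_lt_one_iff] at this
  omega

/-- Each set gets its own vertical strip, inside which it is joined to infinity. -/
theorem exists_translate_accessibleFromInfinity {ι : Type*} [Finite ι] (D : ι → Set Pt)
    (hD : ∀ i, IsBounded (D i)) :
    ∃ τ : ι → Pt, (Pairwise fun i j ↦ Disjoint ((τ i + ·) '' D i) ((τ j + ·) '' D j)) ∧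
      ∀ i, ∀ p ∈ D i, AccessibleFromInfinity (D i) p →
        AccessibleFromInfinity (⋃ j, (τ j + ·) '' D j) (τ i + p) := by
  obtain ⟨R, hR, hDR⟩ := (isBounded_iUnion.2 hD).subset_ball_lt 0 0
  replace hDR i : D i ⊆ ball 0 R := (subset_iUnion D i).trans hDR
  obtain ⟨e, he⟩ := exists_injective_nat ι
  let τ (i : ι) : Pt := (2 * R * e i, 0)
  have hseparate : ∀ {i j : ι} {p q : Pt}, |p.1| ≤ R → q ∈ D j → τ i + p = τ j + q → i = j :=
    fun hp hq h ↦ he (eq_of_two_mul_add_eq hp (abs_fst_lt_of_mem_ball (hDR _ hq))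
      (congrArg Prod.fst h))
  refine ⟨τ, ?_, ?_⟩
  · refine fun i j hij ↦ disjoint_left.2 ?_
    rintro _ ⟨p, hp, rfl⟩ ⟨q, hq, hpq⟩
    exact hij (hseparate (abs_fst_lt_of_mem_ball (hDR i hp)).le hq hpq.symm)
  · intro i p hpD hp
    obtain ⟨S, hSD, hS, hunb, hpS, hstrip⟩ := hp.exists_subset_strip hR (hDR i) hpD
    have hcont : Continuous (τ i + ·) := by fun_prop
    refine ⟨(τ i + ·) '' S, ?_, hS.image _ hcont.continuousOn, ?_,
      image_closure_subset_closure_image hcont (mem_image_of_mem _ hpS)⟩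
    · rintro _ ⟨q, hq, rfl⟩ hqD
      obtain ⟨j, q', hq', h⟩ := mem_iUnion.1 hqD
      obtain rfl := hseparate (hstrip q hq) hq' h.symm
      exact hSD hq (add_left_cancel h ▸ hq')
    · exact fun h ↦ hunb ((((isometry_add_left (τ i)).antilipschitz.isBounded_preimage h).subset
        (subset_preimage_image _ _)))

end Topology

namespace IsArcBetween

variable {A : Set Pt} {p q : Pt}

theorem isCompact (hA : IsArcBetween A p q) : IsCompact A := by
  obtain ⟨f, hf, -, -, -, rfl⟩ := hA
  exact isCompact_Icc.image_of_continuousOn hf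

theorem image (hA : IsArcBetween A p q) {φ : Pt → Pt} (hφ : ContinuousOn φ A) (hinj : InjOn φ A) :
    IsArcBetween (φ '' A) (φ p) (φ q) := by
  obtain ⟨f, hf, hfinj, rfl, rfl, rfl⟩ := hA
  exact ⟨φ ∘ f, hφ.comp hf (mapsTo_image _ _), hinj.comp hfinj (mapsTo_image _ _), rfl, rfl,
    (image_comp φ f _).symm⟩

theorem right_mem_closure_connectedComponentIn (hA : IsArcBetween A p q) {D : Set Pt}
    (hAD : A ∩ D ⊆ {q}) : q ∈ closure (connectedComponentIn Dᶜ p) := by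
  obtain ⟨f, hf, hfinj, rfl, rfl, rfl⟩ := hA
  have hf' : ContinuousOn f (Ico 0 1) := hf.mono Ico_subset_Icc_self
  have hcompl : f '' Ico 0 1 ⊆ Dᶜ := by
    rintro _ ⟨t, ht, rfl⟩ htD
    have hft : f t = f 1 := hAD ⟨mem_image_of_mem f (Ico_subset_Icc_self ht), htD⟩
    exact ht.2.ne (hfinj (Ico_subset_Icc_self ht) (right_mem_Icc.2 zero_le_one) hft)
  have hcomp : f '' Ico 0 1 ⊆ connectedComponentIn Dᶜ (f 0) :=
    (isPreconnected_Ico.image f hf').subset_connectedComponentIn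
      (mem_image_of_mem f (left_mem_Ico.2 zero_lt_one)) hcompl
  refine closure_mono hcomp (((hf 1 (right_mem_Icc.2 zero_le_one)).mono
    Ico_subset_Icc_self).mem_closure_image ?_)
  rw [closure_Ico zero_ne_one]
  exact right_mem_Icc.2 zero_le_one

end IsArcBetween

theorem apply_eq_of_reachable {V α : Type*} {G : SimpleGraph V} {φ : V → α}
    (hφ : ∀ {u v}, G.Adj u v → φ u = φ v) {u v : V} (huv : G.Reachable u v) : φ u = φ v := by
  obtain ⟨p⟩ := huv
  induction p with
  | nil => rfl
  | cons hadj _ ih => exact (hφ hadj).trans ih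

namespace PlanarDrawing

variable {V W : Type} [Fintype V] [Fintype W] {G : SimpleGraph V} {H : SimpleGraph W}

/-- The subset of the plane covered by a drawing: all its vertex points and edge arcs. -/
def carrier (Γ : PlanarDrawing G) : Set Pt :=
  range Γ.ρ ∪ ⋃ e ∈ G.edgeSet, Γ.arc e

theorem ρ_mem_carrier (Γ : PlanarDrawing G) (v : V) : Γ.ρ v ∈ Γ.carrier :=
  Or.inl (mem_range_self v)

theorem arc_subset_carrier (Γ : PlanarDrawing G) {e : Sym2 V} (he : e ∈ G.edgeSet) :
    Γ.arc e ⊆ Γ.carrier :=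
  (subset_biUnion_of_mem (u := Γ.arc) he).trans subset_union_right

theorem isCompact_carrier (Γ : PlanarDrawing G) : IsCompact Γ.carrier := by
  refine (finite_range Γ.ρ).isCompact.union (G.edgeSet.toFinite.isCompact_biUnion ?_)
  rintro ⟨u, v⟩ huv
  exact (Γ.arc_isArc u v huv).isCompact

theorem isOuterplaneDrawing_iff_accessibleFromInfinity (Γ : PlanarDrawing G) :
    IsOuterplaneDrawing Γ ↔ ∀ v, AccessibleFromInfinity Γ.carrier (Γ.ρ v) :=
  (isOuterplanePair_iff_accessibleFromInfinity Γ.isCompact_carrier.isBounded).trans forall_mem_range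

/-- The drawing of `H` obtained from a drawing of `G` by restricting to a copy of `H` in `G`. -/
def comap (Γ : PlanarDrawing G) (f : SimpleGraph.Copy H G) : PlanarDrawing H where
  ρ := Γ.ρ ∘ f
  inj := Γ.inj.comp f.injective
  arc e := Γ.arc (e.map f)
  arc_isArc u v huv := Γ.arc_isArc (f u) (f v) (f.toHom.map_adj huv)
  vertex_mem e he w hw := by
    obtain ⟨a, ha, haw⟩ :=
      Sym2.mem_map.1 (Γ.vertex_mem _ (f.toHom.map_mem_edgeSet he) (f w) hw)
    exact f.injective haw ▸ ha
  arcs_cross e he e' he' hne x hx := by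
    obtain ⟨w, hw, hw', rfl⟩ := Γ.arcs_cross _ (f.toHom.map_mem_edgeSet he) _
      (f.toHom.map_mem_edgeSet he') ((Sym2.map.injective f.injective).ne hne) x hx
    obtain ⟨a, ha, rfl⟩ := Sym2.mem_map.1 hw
    obtain ⟨b, hb, hba⟩ := Sym2.mem_map.1 hw'
    exact ⟨a, ha, f.injective hba ▸ hb, rfl⟩

theorem carrier_comap_subset (Γ : PlanarDrawing G) (f : SimpleGraph.Copy H G) :
    (Γ.comap f).carrier ⊆ Γ.carrier :=
  union_subset_union (range_comp_subset_range f Γ.ρ) <| iUnion₂_subset fun _ he ↦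
    subset_biUnion_of_mem (u := Γ.arc) (f.toHom.map_mem_edgeSet he)

theorem ρ_mem_carrier_comap_iff (Γ : PlanarDrawing G) (f : SimpleGraph.Copy H G) {v : V} :
    Γ.ρ v ∈ (Γ.comap f).carrier ↔ v ∈ range f := by
  constructor
  · rintro (⟨w, hw⟩ | hv)
    · exact ⟨w, Γ.inj hw⟩
    · obtain ⟨e, he, hve⟩ := mem_iUnion₂.1 hv
      obtain ⟨w, -, hw⟩ := Sym2.mem_map.1 (Γ.vertex_mem _ (f.toHom.map_mem_edgeSet he) v hve)
      exact ⟨w, hw⟩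
  · rintro ⟨w, rfl⟩
    exact (Γ.comap f).ρ_mem_carrier w

theorem arc_inter_carrier_comap_subset (Γ : PlanarDrawing G) (f : SimpleGraph.Copy H G) {v w : V}
    (hvw : G.Adj v w) (hv : v ∉ range f) : Γ.arc s(v, w) ∩ (Γ.comap f).carrier ⊆ {Γ.ρ w} := by
  have eq_of_mem {a : W} (ha : f a ∈ s(v, w)) : f a = w :=
    (Sym2.mem_iff.1 ha).resolve_left fun h ↦ hv ⟨a, h⟩
  rintro x ⟨hx, ⟨a, rfl⟩ | hxf⟩
  · exact congrArg Γ.ρ (eq_of_mem (Γ.vertex_mem _ hvw (f a) hx))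
  · obtain ⟨e, he, hxe⟩ := mem_iUnion₂.1 hxf
    have hne : s(v, w) ≠ e.map f := fun h ↦
      let ⟨a, _, ha⟩ := Sym2.mem_map.1 (h ▸ Sym2.mem_mk_left v w)
      hv ⟨a, ha⟩
    obtain ⟨u, hu, hue, rfl⟩ :=
      Γ.arcs_cross _ hvw _ (f.toHom.map_mem_edgeSet he) hne x ⟨hx, hxe⟩
    obtain ⟨a, -, rfl⟩ := Sym2.mem_map.1 hue
    exact congrArg Γ.ρ (eq_of_mem hu)

theorem ρ_mem_closure_connectedComponentIn (Γ : PlanarDrawing G) (f : SimpleGraph.Copy H G)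
    {v w : V} (hvw : G.Adj v w) (hv : v ∉ range f) :
    Γ.ρ w ∈ closure (connectedComponentIn (Γ.comap f).carrierᶜ (Γ.ρ v)) :=
  (Γ.arc_isArc v w hvw).right_mem_closure_connectedComponentIn
    (Γ.arc_inter_carrier_comap_subset f hvw hv)

theorem connectedComponentIn_compl_carrier_comap_eq (Γ : PlanarDrawing G)
    (f : SimpleGraph.Copy H G) {t : Set V} (ht : (G.induce t).Preconnected)
    (hft : Disjoint (range f) t) {v w : V} (hv : v ∈ t) (hw : w ∈ t) :
    connectedComponentIn (Γ.comap f).carrierᶜ (Γ.ρ v) =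
      connectedComponentIn (Γ.comap f).carrierᶜ (Γ.ρ w) := by
  refine apply_eq_of_reachable (φ := fun v : t ↦ connectedComponentIn (Γ.comap f).carrierᶜ (Γ.ρ v))
    (fun {v w} hvw ↦ ?_) (ht ⟨v, hv⟩ ⟨w, hw⟩)
  have hnot (v : t) : (v : V) ∉ range f := hft.notMem_of_mem_right v.2
  exact connectedComponentIn_eq_of_mem_closure (Γ.comap f).isCompact_carrier.isClosed.isOpen_compl
    ((Γ.ρ_mem_carrier_comap_iff f).not.2 (hnot w))
    (Γ.ρ_mem_closure_connectedComponentIn f hvw (hnot v))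

/-- The image of a drawing under a map of the plane that is continuous and injective on it. -/
def map (Γ : PlanarDrawing G) (φ : Pt → Pt) (hφ : ContinuousOn φ Γ.carrier)
    (hinj : InjOn φ Γ.carrier) : PlanarDrawing G where
  ρ := φ ∘ Γ.ρ
  inj u v huv := Γ.inj (hinj (Γ.ρ_mem_carrier u) (Γ.ρ_mem_carrier v) huv)
  arc e := φ '' Γ.arc e
  arc_isArc u v huv :=
    have hsub := Γ.arc_subset_carrier (G.mem_edgeSet.2 huv)
    (Γ.arc_isArc u v huv).image (hφ.mono hsub) (hinj.mono hsub)
  vertex_mem e he w hw :=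
    Γ.vertex_mem e he w
      ((hinj.mem_image_iff (Γ.arc_subset_carrier he) (Γ.ρ_mem_carrier w)).1 hw)
  arcs_cross e he e' he' hne x hx := by
    rw [← hinj.image_inter (Γ.arc_subset_carrier he) (Γ.arc_subset_carrier he')] at hx
    obtain ⟨y, hy, rfl⟩ := hx
    obtain ⟨w, hw, hw', rfl⟩ := Γ.arcs_cross e he e' he' hne y hy
    exact ⟨w, hw, hw', rfl⟩

theorem carrier_map (Γ : PlanarDrawing G) (φ : Pt → Pt) (hφ : ContinuousOn φ Γ.carrier)
    (hinj : InjOn φ Γ.carrier) : (Γ.map φ hφ hinj).carrier = φ '' Γ.carrier := by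
  simp [carrier, map, image_union, image_iUnion, range_comp]

end PlanarDrawing

section Glue

theorem exists_connectedComponent_map_coe_eq {V : Type*} {G : SimpleGraph V} {e : Sym2 V}
    (he : e ∈ G.edgeSet) :
    ∃ c : G.ConnectedComponent, ∃ e' ∈ (G.induce c.supp).edgeSet, e'.map (↑) = e := by
  induction e with | _ u v =>
  exact ⟨G.connectedComponentMk v,
    s(⟨u, SimpleGraph.ConnectedComponent.connectedComponentMk_eq_of_adj he⟩, ⟨v, rfl⟩), he, rfl⟩

variable {V : Type} {G : SimpleGraph V}

namespace PlanarDrawing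

variable [∀ c : G.ConnectedComponent, Fintype c.supp]

/-- The position of `v` when the connected components are drawn independently. -/
def glueρ (Γ : ∀ c : G.ConnectedComponent, PlanarDrawing (G.induce c.supp)) (v : V) : Pt :=
  (Γ (G.connectedComponentMk v)).ρ ⟨v, rfl⟩

/-- The arc of `e` when the connected components are drawn independently: the union is taken over
the only component that contains `e`. -/
def glueArc (Γ : ∀ c : G.ConnectedComponent, PlanarDrawing (G.induce c.supp)) (e : Sym2 V) :
    Set Pt :=
  ⋃ (c) (e' : Sym2 c.supp) (_ : e'.map (↑) = e), (Γ c).arc e'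

theorem glueρ_coe (Γ : ∀ c : G.ConnectedComponent, PlanarDrawing (G.induce c.supp))
    {c : G.ConnectedComponent} (v : c.supp) : glueρ Γ v = (Γ c).ρ v := by
  obtain ⟨v, rfl⟩ := v
  rfl

theorem glueρ_mem_carrier (Γ : ∀ c : G.ConnectedComponent, PlanarDrawing (G.induce c.supp))
    (v : V) : glueρ Γ v ∈ (Γ (G.connectedComponentMk v)).carrier :=
  ρ_mem_carrier _ _

theorem glueArc_map_coe (Γ : ∀ c : G.ConnectedComponent, PlanarDrawing (G.induce c.supp))
    {c : G.ConnectedComponent} (e : Sym2 c.supp) : glueArc Γ (e.map (↑)) = (Γ c).arc e := by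
  refine subset_antisymm (iUnion_subset fun c' ↦ iUnion₂_subset fun e' he' ↦ ?_) fun x hx ↦
    mem_iUnion.2 ⟨c, mem_iUnion₂.2 ⟨e, rfl, hx⟩⟩
  obtain rfl : c' = c := by
    induction e' with | _ u v =>
    have hu : (u : V) ∈ Sym2.map (↑) e := he' ▸ Sym2.mem_mk_left (u : V) v
    obtain ⟨w, -, hw⟩ := Sym2.mem_map.1 hu
    exact u.2.symm.trans (hw ▸ w.2)
  rw [Sym2.map.injective Subtype.val_injective he']

/-- Drawings of the connected components that avoid each other form a drawing of the graph. -/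
def glue [Fintype V] (Γ : ∀ c : G.ConnectedComponent, PlanarDrawing (G.induce c.supp))
    (hΓ : Pairwise fun c d ↦ Disjoint (Γ c).carrier (Γ d).carrier) : PlanarDrawing G where
  ρ := glueρ Γ
  inj u v huv := by
    have hcomp : G.connectedComponentMk u = G.connectedComponentMk v := hΓ.eq
      (not_disjoint_iff.2 ⟨_, glueρ_mem_carrier Γ u, huv ▸ glueρ_mem_carrier Γ v⟩)
    exact congrArg Subtype.val ((Γ _).inj ((glueρ_coe Γ ⟨u, hcomp⟩).symm.trans huv))
  arc := glueArc Γ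
  arc_isArc u v huv := by
    have hcomp := SimpleGraph.ConnectedComponent.connectedComponentMk_eq_of_adj huv
    have harc := (Γ _).arc_isArc ⟨u, hcomp⟩ ⟨v, rfl⟩ huv
    rwa [← glueρ_coe, ← glueρ_coe, ← glueArc_map_coe] at harc
  vertex_mem e he w hw := by
    obtain ⟨c, e, hec, rfl⟩ := exists_connectedComponent_map_coe_eq he
    rw [glueArc_map_coe] at hw
    obtain rfl := hΓ.eq (not_disjoint_iff.2
      ⟨_, glueρ_mem_carrier Γ w, (Γ c).arc_subset_carrier hec hw⟩)
    exact Sym2.mem_map.2 ⟨⟨w, rfl⟩, (Γ _).vertex_mem e hec _ hw, rfl⟩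
  arcs_cross e he e' he' hne x hx := by
    obtain ⟨c, e, hec, rfl⟩ := exists_connectedComponent_map_coe_eq he
    obtain ⟨c', e', hec', rfl⟩ := exists_connectedComponent_map_coe_eq he'
    rw [glueArc_map_coe, glueArc_map_coe] at hx
    obtain rfl := hΓ.eq (not_disjoint_iff.2
      ⟨x, (Γ c).arc_subset_carrier hec hx.1, (Γ c').arc_subset_carrier hec' hx.2⟩)
    obtain ⟨w, hw, hw', rfl⟩ := (Γ c).arcs_cross e hec e' hec' (ne_of_apply_ne _ hne) x hx
    exact ⟨w, Sym2.mem_map.2 ⟨w, hw, rfl⟩, Sym2.mem_map.2 ⟨w, hw', rfl⟩, (glueρ_coe Γ w).symm⟩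

theorem carrier_glue_subset [Fintype V]
    (Γ : ∀ c : G.ConnectedComponent, PlanarDrawing (G.induce c.supp))
    (hΓ : Pairwise fun c d ↦ Disjoint (Γ c).carrier (Γ d).carrier) :
    (glue Γ hΓ).carrier ⊆ ⋃ c, (Γ c).carrier := by
  refine union_subset (range_subset_iff.2 fun v ↦ ?_) (iUnion₂_subset fun e he ↦ ?_)
  · exact mem_iUnion_of_mem _ (glueρ_mem_carrier Γ v)
  · obtain ⟨c, e, hec, rfl⟩ := exists_connectedComponent_map_coe_eq he
    exact (glueArc_map_coe Γ e).subset.trans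
      (((Γ c).arc_subset_carrier hec).trans (subset_iUnion (fun c ↦ (Γ c).carrier) c))

end PlanarDrawing

end Glue

/-- The finite graph `G` admits an outerplane drawing. Finiteness is part of the notion, so that it
does not depend on a choice of `Fintype` instance. -/
def IsOuterplanar {V : Type} (G : SimpleGraph V) : Prop :=
  ∃ (_ : Fintype V) (Γ : PlanarDrawing G), IsOuterplaneDrawing Γ

section Outerplanar

variable {V W : Type} {G : SimpleGraph V} {H : SimpleGraph W}

theorem IsOuterplanar.exists_drawing [Fintype V] (hG : IsOuterplanar G) :
    ∃ Γ : PlanarDrawing G, IsOuterplaneDrawing Γ := by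
  obtain ⟨_, hΓ⟩ := hG
  convert hΓ

theorem IsOuterplanar.of_isContained (hG : IsOuterplanar G) (hHG : H.IsContained G) :
    IsOuterplanar H := by
  obtain ⟨_, Γ, hΓ⟩ := hG
  obtain ⟨f⟩ := hHG
  have := Fintype.ofInjective f f.injective
  rw [Γ.isOuterplaneDrawing_iff_accessibleFromInfinity] at hΓ
  exact ⟨_, Γ.comap f, (PlanarDrawing.isOuterplaneDrawing_iff_accessibleFromInfinity _).2
    fun w ↦ (hΓ (f w)).anti (Γ.carrier_comap_subset f)⟩

theorem isOuterplanar_bot [Finite V] : IsOuterplanar (⊥ : SimpleGraph V) := by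
  have := Fintype.ofFinite V
  obtain ⟨e, he⟩ := exists_injective_nat V
  let Γ : PlanarDrawing (⊥ : SimpleGraph V) :=
    { ρ := Infinite.natEmbedding Pt ∘ e
      inj := (Infinite.natEmbedding Pt).injective.comp he
      arc _ := ∅
      arc_isArc _ _ h := h.elim
      vertex_mem := by simp
      arcs_cross := by simp }
  have hfinite : Γ.carrier.Finite := by simp [PlanarDrawing.carrier, finite_range]
  exact ⟨_, Γ, Γ.isOuterplaneDrawing_iff_accessibleFromInfinity.2
    fun _ ↦ accessibleFromInfinity_of_finite hfinite _⟩

theorem isOuterplanar_of_forall_connectedComponent [Finite V]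
    (hG : ∀ c : G.ConnectedComponent, IsOuterplanar (G.induce c.supp)) : IsOuterplanar G := by
  have := Fintype.ofFinite V
  have (c : G.ConnectedComponent) := Fintype.ofFinite c.supp
  choose Γ hΓ using fun c ↦ (hG c).exists_drawing
  obtain ⟨τ, hdisj, hτ⟩ := exists_translate_accessibleFromInfinity (fun c ↦ (Γ c).carrier)
    fun c ↦ (Γ c).isCompact_carrier.isBounded
  let Γ' (c : G.ConnectedComponent) : PlanarDrawing (G.induce c.supp) :=
    (Γ c).map (τ c + ·) (by fun_prop) (add_right_injective _).injOn
  have hcarrier (c) : (Γ' c).carrier = (τ c + ·) '' (Γ c).carrier := (Γ c).carrier_map _ _ _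
  refine ⟨_, PlanarDrawing.glue Γ' (by simpa only [hcarrier] using hdisj),
    (PlanarDrawing.isOuterplaneDrawing_iff_accessibleFromInfinity _).2 fun v ↦ ?_⟩
  have hv := hτ _ _ ((Γ _).ρ_mem_carrier ⟨v, rfl⟩)
    ((Γ _).isOuterplaneDrawing_iff_accessibleFromInfinity.1 (hΓ _) ⟨v, rfl⟩)
  simp only [← hcarrier] at hv
  exact hv.anti (PlanarDrawing.carrier_glue_subset Γ' _)

/-- Once everything but `s` is erased, the connected set `t` lies in a single face, which has all
of `s` on its boundary; an inversion makes it the outer face. -/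
theorem PlanarDrawing.isOuterplanar_induce_of_dominated [Fintype V] (Γ : PlanarDrawing G)
    {s t : Set V} (ht : (G.induce t).Connected) (hst : Disjoint s t)
    (hdom : ∀ u ∈ s, ∃ v ∈ t, G.Adj v u) : IsOuterplanar (G.induce s) := by
  have := Fintype.ofFinite s
  let f := SimpleGraph.Copy.induce G s
  have hft : Disjoint (range f) t := (Subtype.range_coe (s := s)).symm ▸ hst
  have hnot {v : V} (hv : v ∈ t) : v ∉ range f := hft.notMem_of_mem_right hv
  obtain ⟨r, hr⟩ := ht.nonempty
  have hrD : Γ.ρ r ∉ (Γ.comap f).carrier := (Γ.ρ_mem_carrier_comap_iff f).not.2 (hnot hr)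
  let Γ' := (Γ.comap f).map (invAt (Γ.ρ r))
    ((continuousOn_invAt _).mono (subset_compl_singleton_iff.2 hrD)) (invAt_injective _).injOn
  refine ⟨_, Γ', Γ'.isOuterplaneDrawing_iff_accessibleFromInfinity.2 fun u ↦ ?_⟩
  obtain ⟨v, hv, hvu⟩ := hdom u u.2
  have hu : Γ.ρ u ∈ closure (connectedComponentIn (Γ.comap f).carrierᶜ (Γ.ρ r)) :=
    Γ.connectedComponentIn_compl_carrier_comap_eq f ht.preconnected hft hv hr ▸
      Γ.ρ_mem_closure_connectedComponentIn f hvu (hnot hv)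
  rw [PlanarDrawing.carrier_map]
  exact accessibleFromInfinity_image_invAt (Γ.comap f).isCompact_carrier.isClosed hrD
    (ne_of_mem_of_not_mem ((Γ.comap f).ρ_mem_carrier u) hrD) hu

end Outerplanar

section BreadthFirstLevels

variable {V : Type*} {G : SimpleGraph V}

theorem connected_induce_ball {r : V} {d : ℕ∞} (hd : 0 < d) :
    (G.induce (G.ball r d)).Connected := by
  refine G.induce_connected_of_patches r (SimpleGraph.mem_ball_self hd) fun {v} hv ↦ ?_
  rw [SimpleGraph.mem_ball] at hv
  obtain ⟨p, hp⟩ := SimpleGraph.exists_walk_of_edist_ne_top (hv.trans_le le_top).ne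
  refine ⟨{w | w ∈ p.support}, fun w hw ↦ ?_, p.end_mem_support, p.start_mem_support,
    p.connected_induce_support.preconnected _ _⟩
  obtain ⟨q₁, q₂, rfl⟩ := p.mem_support_iff_exists_append.1 hw
  calc G.edist w r ≤ q₂.length := SimpleGraph.edist_le q₂
    _ ≤ (q₁.append q₂).length := by simp
    _ < d := hp ▸ hv

theorem exists_adj_edist_lt {u r : V} {d : ℕ} (hu : G.edist u r = (d + 1 : ℕ)) :
    ∃ v, G.edist v r < (d + 1 : ℕ) ∧ G.Adj v u := by
  obtain ⟨p, hp⟩ := SimpleGraph.exists_walk_of_edist_eq_coe hu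
  cases p with
  | nil => simp at hp
  | cons huv q =>
    refine ⟨_, (SimpleGraph.edist_le q).trans_lt ?_, huv.symm⟩
    exact_mod_cast (Nat.lt_succ_self _).trans_eq hp

/-- A root of the breadth-first search tree that contains `v`: a vertex chosen once for each
connected component. -/
noncomputable def bfsRoot (G : SimpleGraph V) (v : V) : V :=
  (G.connectedComponentMk v).out

/-- The depth of `v` in the breadth-first search tree of its connected component. -/
noncomputable def bfsLevel (G : SimpleGraph V) (v : V) : ℕ :=
  G.dist v (bfsRoot G v)

theorem edist_bfsRoot (v : V) : G.edist v (bfsRoot G v) = bfsLevel G v :=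
  ((SimpleGraph.ConnectedComponent.exact (Quot.out_eq _)).symm.coe_dist_eq_edist).symm

theorem bfsRoot_eq_of_adj {u v : V} (huv : G.Adj u v) : bfsRoot G u = bfsRoot G v :=
  congrArg Quot.out (SimpleGraph.ConnectedComponent.connectedComponentMk_eq_of_adj huv)

theorem bfsLevel_le_succ_of_adj {u v : V} (huv : G.Adj u v) : bfsLevel G u ≤ bfsLevel G v + 1 := by
  rw [bfsLevel, bfsLevel, bfsRoot_eq_of_adj huv, add_comm, ← SimpleGraph.dist_eq_one_iff_adj.2 huv]
  exact huv.reachable.dist_triangle_left _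

end BreadthFirstLevels

section PlanarLevels

variable {V : Type} [Fintype V] {G : SimpleGraph V}

theorem PlanarDrawing.isOuterplanar_induce_setOf_edist_eq (Γ : PlanarDrawing G) (r : V) (d : ℕ) :
    IsOuterplanar (G.induce {v | G.edist v r = d}) := by
  cases d with
  | zero =>
    have : Subsingleton {v | G.edist v r = (0 : ℕ)} := by simp
    rw [Subsingleton.elim (G.induce {v | G.edist v r = (0 : ℕ)}) ⊥]
    exact isOuterplanar_bot
  | succ d =>
    refine Γ.isOuterplanar_induce_of_dominated (t := G.ball r (d + 1 : ℕ))
      (connected_induce_ball (by positivity)) ?_ fun u hu ↦ exists_adj_edist_lt hu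
    exact disjoint_left.2 fun v hv hlt ↦ (SimpleGraph.mem_ball.1 hlt).ne hv

theorem PlanarDrawing.isOuterplanar_induce_of_bfsLevel_eq (Γ : PlanarDrawing G) {s : Set V}
    (hs : ∀ u ∈ s, ∀ v ∈ s, G.Adj u v → bfsLevel G u = bfsLevel G v) :
    IsOuterplanar (G.induce s) := by
  refine isOuterplanar_of_forall_connectedComponent fun c ↦ ?_
  obtain ⟨r, d, hrd⟩ : ∃ r, ∃ d : ℕ, ∀ v ∈ c.supp, G.edist v r = d := by
    obtain ⟨u, rfl⟩ := c.exists_rep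
    refine ⟨bfsRoot G u, bfsLevel G u, fun v hv ↦ ?_⟩
    have hcomp : (G.induce s).Reachable v u := SimpleGraph.ConnectedComponent.exact hv
    have hroot : bfsRoot G v = bfsRoot G u :=
      apply_eq_of_reachable (φ := fun w : s ↦ bfsRoot G w)
        (fun hadj ↦ bfsRoot_eq_of_adj (G := G) hadj) hcomp
    have hlevel : bfsLevel G v = bfsLevel G u :=
      apply_eq_of_reachable (φ := fun w : s ↦ bfsLevel G w) (fun {w w'} ↦ hs w w.2 w' w'.2) hcomp
    rw [← hroot, ← hlevel, edist_bfsRoot]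
  exact (Γ.isOuterplanar_induce_setOf_edist_eq r d).of_isContained
    ⟨⟨fun v ↦ ⟨v, hrd v v.2⟩, id⟩,
      fun _ _ h ↦ Subtype.ext (Subtype.ext (Subtype.mk.inj h))⟩

theorem PlanarDrawing.exists_isOuterplanar_induce_and_compl (Γ : PlanarDrawing G) :
    ∃ s : Set V, IsOuterplanar (G.induce s) ∧ IsOuterplanar (G.induce sᶜ) := by
  refine ⟨{v | Even (bfsLevel G v)}, Γ.isOuterplanar_induce_of_bfsLevel_eq ?_,
    Γ.isOuterplanar_induce_of_bfsLevel_eq ?_⟩ <;>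
  · intro u hu v hv huv
    have := bfsLevel_le_succ_of_adj huv
    have := bfsLevel_le_succ_of_adj huv.symm
    grind

end PlanarLevels

/-- Every `n`-vertex planar graph contains a vertex subset `V'` with `2·|V'| ≥ n`
inducing an outerplanar subgraph. -/
theorem exists_outerplanar_induced {V : Type} [Fintype V]
    (G : SimpleGraph V) (n : ℕ) (hn : Fintype.card V = n)
    (hplanar : Nonempty (PlanarDrawing G)) :
    ∃ V' : Finset V, n ≤ 2 * V'.card ∧
      ∃ Γ' : PlanarDrawing (G.induce (↑V' : Set V)), IsOuterplaneDrawing Γ' := by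
  classical
  obtain ⟨Γ⟩ := hplanar
  obtain ⟨s, hs, hsc⟩ := Γ.exists_isOuterplanar_induce_and_compl
  rw [← s.coe_toFinset] at hs
  rw [← sᶜ.coe_toFinset] at hsc
  have hcard : s.toFinset.card + sᶜ.toFinset.card = n := by
    rw [toFinset_compl, Finset.card_add_card_compl, hn]
  obtain h | h : n ≤ 2 * s.toFinset.card ∨ n ≤ 2 * sᶜ.toFinset.card := by omega
  · exact ⟨s.toFinset, h, hs.exists_drawing⟩
  · exact ⟨sᶜ.toFinset, h, hsc.exists_drawing⟩
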